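/- arXiv:1305.4444 — 2 statements merged into one kernel-verified Lean document; each statement's English description precedes it below -/
import Mathlib

section
/- min{t_i(C) : i = 1,…,V} = d(C^⊥) − 2. -/
open Matrix

/-- The dual code of a linear code `C ⊆ 𝔽_q^V`:
`C^⊥ = {x ∈ 𝔽_q^V : x·c = 0 for all c ∈ C}`. -/
def dualCode {F : Type*} [Field F] {V : ℕ} (C : Submodule F (Fin V → F)) :
    Submodule F (Fin V → F) where
  carrier := {x | ∀ c ∈ C, x ⬝ᵥ c = 0}
  add_mem' := fun ha hb c hc => by
    simp only [Set.mem_setOf_eq] at *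
    simp [add_dotProduct, ha c hc, hb c hc]
  zero_mem' := fun c _ => by simp
  smul_mem' := fun a x hx => by
    intro c hc
    simp only [Set.mem_setOf_eq] at hx
    simp [smul_dotProduct, hx c hc]

/-!
The dual code consists of the linear relations among the columns of a generator matrix. A set `B`
avoiding `i` is a substitution set for `i` exactly when some relation involving column `i` is
supported in `B ∪ {i}`. Hence all `τ`-subsets avoiding `i` are adversary sets if and only if every
relation involving `i` has weight at least `τ + 2`. Nonzero relations have weight at least the
minimum distance `d` of the dual code, so `t_i ≥ d - 2` for all `i`, and a relation of weight `d`
forces `t_i ≤ d - 2` for every `i` that it involves.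
-/

/-- The Hamming weights of the nonzero words of a linear code; the least of them is the minimum
distance of the code. -/
def nonzeroWeights {R ι : Type*} [Semiring R] [DecidableEq R] [Fintype ι]
    (C : Submodule R (ι → R)) : Set ℕ :=
  {w | ∃ c ∈ C, c ≠ 0 ∧ hammingNorm c = w}

/-- The sizes `τ` for which all `τ`-subsets of `ι \ {i}` are adversary sets for `i` with respect to
the vectors `v`; the greatest of them is the paper's `t_i`. The bound `τ ≤ |ι| - 1` excludes the
sizes for which there is no such subset. -/
def adversarySizes (R : Type*) {M ι : Type*} [Semiring R] [AddCommMonoid M] [Module R M] [Fintype ι]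
    (v : ι → M) (i : ι) : Set ℕ :=
  {τ | τ ≤ Fintype.card ι - 1 ∧ ∀ B : Finset ι, i ∉ B → B.card = τ →
    v i ∉ Submodule.span R (v '' (B : Set ι))}

section HammingNorm

variable {R ι : Type*} [Zero R] [DecidableEq R] [Fintype ι]

theorem hammingNorm_le_card_of_support_subset {x : ι → R} {s : Finset ι}
    (hxs : Function.support x ⊆ s) : hammingNorm x ≤ s.card :=
  Finset.card_le_card fun _ hj => hxs (Finset.mem_filter.mp hj).2

theorem exists_card_eq_support_subset_insert {x : ι → R} {i : ι} {τ : ℕ}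
    (hxi : x i ≠ 0) (hxτ : hammingNorm x ≤ τ + 1) (hτ : τ ≤ Fintype.card ι - 1) :
    ∃ B : Finset ι, i ∉ B ∧ B.card = τ ∧ Function.support x ⊆ insert i (B : Set ι) := by
  classical
  let S : Finset ι := {j | x j ≠ 0}
  have hS : (S.erase i).card ≤ τ := by
    rw [Finset.card_erase_of_mem (by simpa [S] using hxi)]
    exact Nat.sub_le_of_le_add hxτ
  obtain ⟨B, hSB, hBi, hB⟩ := Finset.exists_subsuperset_card_eq
    (Finset.erase_subset_erase i S.subset_univ) hS
    (by rwa [Finset.card_erase_of_mem (Finset.mem_univ i)])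
  refine ⟨B, fun hi => Finset.notMem_erase i _ (hBi hi), hB, fun j hj => ?_⟩
  exact or_iff_not_imp_left.mpr fun hji => hSB (Finset.mem_erase.mpr ⟨hji, by simpa [S] using hj⟩)

end HammingNorm

section LinearRelations

variable {K M ι : Type*} [DivisionRing K] [AddCommGroup M] [Module K M] [Fintype ι]

theorem mem_span_image_iff_exists_mem_ker_linearCombination (v : ι → M) {i : ι} {B : Set ι}
    (hiB : i ∉ B) :
    v i ∈ Submodule.span K (v '' B) ↔
      ∃ x ∈ LinearMap.ker (Fintype.linearCombination K v),
        x i ≠ 0 ∧ Function.support x ⊆ insert i B := by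
  classical
  constructor
  · intro hi
    obtain ⟨a, haB, hav⟩ := (Finsupp.mem_span_image_iff_linearCombination K).mp hi
    have hav_fintype : Fintype.linearCombination K v a = v i := by
      rw [← hav, Fintype.linearCombination_apply, Finsupp.linearCombination_apply,
        Finsupp.sum_fintype _ _ fun j => zero_smul K (v j)]
    have ha_zero {j : ι} (hj : j ∉ B) : a j = 0 :=
      Finsupp.notMem_support_iff.mp fun hja => hj (haB hja)
    refine ⟨Pi.single i 1 - ⇑a, ?_, ?_, ?_⟩
    · rw [LinearMap.mem_ker, map_sub, Fintype.linearCombination_apply_single, one_smul,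
        hav_fintype, sub_self]
    · simp [ha_zero hiB]
    · intro j hj
      by_contra hjB
      obtain ⟨hji, hjB⟩ := not_or.mp hjB
      exact hj (by simp [hji, ha_zero hjB])
  · rintro ⟨x, hx, hxi, hxB⟩
    rw [LinearMap.mem_ker, Fintype.linearCombination_apply,
      ← Finset.add_sum_erase _ _ (Finset.mem_univ i)] at hx
    rw [← Submodule.smul_mem_iff _ hxi, eq_neg_of_add_eq_zero_left hx]
    refine Submodule.neg_mem _ (Submodule.sum_mem _ fun j hj => ?_)
    by_cases hxj : x j = 0
    · simp [hxj]
    · have hjB : j ∈ B := (hxB hxj).resolve_left (Finset.ne_of_mem_erase hj)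
      exact Submodule.smul_mem _ _ (Submodule.subset_span (Set.mem_image_of_mem v hjB))

theorem mem_adversarySizes_iff_forall_add_two_le_hammingNorm [DecidableEq K] {v : ι → M} {i : ι}
    {τ : ℕ} :
    τ ∈ adversarySizes K v i ↔ τ ≤ Fintype.card ι - 1 ∧
      ∀ x ∈ LinearMap.ker (Fintype.linearCombination K v), x i ≠ 0 → τ + 2 ≤ hammingNorm x := by
  classical
  refine and_congr_right fun hτ => ⟨fun hadv x hx hxi => ?_, fun hweight B hiB hB hspan => ?_⟩
  · by_contra! hlt
    obtain ⟨B, hiB, hB, hxB⟩ :=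
      exists_card_eq_support_subset_insert hxi (Nat.lt_succ_iff.mp hlt) hτ
    exact hadv B hiB hB
      ((mem_span_image_iff_exists_mem_ker_linearCombination v hiB).mpr ⟨x, hx, hxi, hxB⟩)
  · obtain ⟨x, hx, hxi, hxB⟩ :=
      (mem_span_image_iff_exists_mem_ker_linearCombination v hiB).mp hspan
    have hle : hammingNorm x ≤ (insert i B).card :=
      hammingNorm_le_card_of_support_subset (by simpa using hxB)
    rw [Finset.card_insert_of_notMem hiB, hB] at hle
    exact absurd (hweight x hx hxi) (by lia)

theorem stmt_14_general [DecidableEq K] {v : ι → M} {d : ℕ}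
    (hd : IsLeast (nonzeroWeights (LinearMap.ker (Fintype.linearCombination K v))) d)
    {t : ι → ℕ} (ht : ∀ i, IsGreatest (adversarySizes K v i) (t i)) :
    IsLeast (Set.range t) (d - 2) := by
  obtain ⟨⟨c, hc, hc0, rfl⟩, hmin⟩ := hd
  obtain ⟨i, hci⟩ := Function.ne_iff.mp hc0
  -- This also gives `2 ≤ d`, so the subtraction in `d - 2` does not truncate.
  have hupper : t i + 2 ≤ hammingNorm c :=
    (mem_adversarySizes_iff_forall_add_two_le_hammingNorm.mp (ht i).1).2 c hc hci
  have hlower (j : ι) : hammingNorm c - 2 ≤ t j := by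
    refine (ht j).2 (mem_adversarySizes_iff_forall_add_two_le_hammingNorm.mpr
      ⟨?_, fun x hx hxj => ?_⟩)
    · have := hammingNorm_le_card_fintype (x := c)
      lia
    · have : hammingNorm c ≤ hammingNorm x :=
        hmin ⟨x, hx, Function.ne_iff.mpr ⟨j, hxj⟩, rfl⟩
      lia
  exact ⟨⟨i, (Nat.le_sub_of_add_le hupper).antisymm (hlower i)⟩, Set.forall_mem_range.mpr hlower⟩

end LinearRelations

theorem mem_dualCode_span {F : Type*} [Field F] {V : ℕ} {s : Set (Fin V → F)} {x : Fin V → F} :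
    x ∈ dualCode (Submodule.span F s) ↔ ∀ c ∈ s, x ⬝ᵥ c = 0 :=
  Submodule.span_le (p := LinearMap.ker (dotProductBilin F F x))

theorem dualCode_eq_ker_linearCombination_col {F m : Type*} [Field F] {V : ℕ}
    {C : Submodule F (Fin V → F)} {G : Matrix m (Fin V) F}
    (hG : Submodule.span F (Set.range G.row) = C) :
    dualCode C = LinearMap.ker (Fintype.linearCombination F G.col) := by
  ext x
  rw [← hG, mem_dualCode_span, Set.forall_mem_range, LinearMap.mem_ker,
    Fintype.linearCombination_apply, funext_iff]
  simp [dotProduct]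

/-- With `t_i(C)` the largest `τ` (with `τ ≤ V − 1`, so that such
subsets exist) such that every subset of `{1,…,V}\{i}` of cardinality `τ` is an
adversary set for `i`: `min{t_i(C) : i = 1,…,V} = d(C^⊥) − 2`. -/
theorem stmt_14 {F : Type*} [Field F] [Fintype F] [DecidableEq F] {V k : ℕ}
    (hV : 0 < V)
    (C : Submodule F (Fin V → F)) (hCk : Module.finrank F C = k)
    (hdC : ∀ c ∈ C, c ≠ 0 → 2 ≤ hammingNorm c)
    (G : Matrix (Fin k) (Fin V) F)
    (hGspan : Submodule.span F (Set.range fun i : Fin k => G i) = C)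
    (hGli : LinearIndependent F (fun i : Fin k => G i))
    (d' : ℕ)
    (hd' : IsLeast {w | ∃ c ∈ dualCode C, c ≠ 0 ∧ hammingNorm c = w} d')
    (hd'2 : 2 ≤ d')
    (t : Fin V → ℕ)
    (ht : ∀ i : Fin V,
      IsGreatest {τ : ℕ | τ ≤ V - 1 ∧ ∀ A : Finset (Fin V), i ∉ A → A.card = τ →
        (fun s => G s i) ∉
          Submodule.span F ((fun j => fun s => G s j) '' (A : Set (Fin V)))} (t i)) :
    IsLeast (Set.range t) (d' - 2) := by
  rw [dualCode_eq_ker_linearCombination_col hGspan] at hd'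
  exact stmt_14_general hd' fun i => by rw [adversarySizes, Fintype.card_fin]; exact ht i
end

section
/- For any i ∈ {1,…,V}, a subset B ⊆ {1,…,V}\{i} is a minimal substitution set for i if and only if there exists a codeword c ∈ C^⊥ that is minimal with respect to i and whose support equals B ∪ {i}. -/
open Matrix

/-- A codeword `c` of a code `D ⊆ 𝔽_q^V` is minimal with respect to coordinate `i`
if `c ∈ D`, `c_i = 1`, and there is no other codeword of `D` whose `i`-th component
is `1` with support strictly contained in that of `c`. -/
def IsMinimalWrt {F : Type*} [Field F] {V : ℕ} (D : Submodule F (Fin V → F))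
    (i : Fin V) (c : Fin V → F) : Prop :=
  c ∈ D ∧ c i = 1 ∧
    ¬ ∃ c' ∈ D, c' ≠ c ∧ c' i = 1 ∧ Function.support c' ⊂ Function.support c

/-!
A codeword `c` of the dual code is a linear relation `∑ j, c j • g_j = 0` among the columns of `G`.
If `c i = 1`, solving for `g_i` shows that `supp c \ {i}` is a substitution set for `i`. Conversely,
writing `g_i` as a combination of the columns in a substitution set `B` gives such a codeword with
`supp c \ {i} ⊆ B`. Since every substitution set thus contains one of this form, the minimal
substitution sets are the minimal sets of the form `supp c \ {i}`.
-/

theorem minimal_iff_exists_minimalFor {α β : Type*} [PartialOrder β] {P : β → Prop} {Q : α → Prop}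
    {f : α → β} {b : β} (hQP : ∀ a, Q a → P (f a)) (hPQ : ∀ b, P b → ∃ a, Q a ∧ f a ≤ b) :
    Minimal P b ↔ ∃ a, MinimalFor Q f a ∧ f a = b := by
  constructor
  · intro hb
    obtain ⟨a, ha, hab⟩ := hPQ b hb.prop
    obtain rfl := hb.eq_of_le (hQP a ha) hab
    exact ⟨a, ⟨ha, fun a' ha' hle => hb.le_of_le (hQP a' ha') hle⟩, rfl⟩
  · rintro ⟨a, ha, rfl⟩
    refine ⟨hQP a ha.prop, fun b hb hle => ?_⟩
    obtain ⟨a', ha', hab⟩ := hPQ b hb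
    exact (ha.le_of_le ha' (hab.trans hle)).trans hab

theorem minimalFor_sdiff_iff {α β : Type*} [GeneralizedCoheytingAlgebra β] {P : α → Prop}
    {f : α → β} {s : β} {a : α} (hs : ∀ a, P a → s ≤ f a) :
    MinimalFor P (fun x => f x \ s) a ↔ MinimalFor P f a := by
  have sdiff_le_sdiff_iff {x y : α} (hy : P y) : f x \ s ≤ f y \ s ↔ f x ≤ f y := by
    rw [sdiff_le_iff, sup_sdiff_cancel_right (hs y hy)]
  refine and_congr_right fun ha => forall₂_congr fun x hx => ?_
  rw [sdiff_le_sdiff_iff ha, sdiff_le_sdiff_iff hx]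

section Relations

variable {R M ι : Type*} [Ring R] [AddCommGroup M] [Module R M] {v : ι → M} {i : ι} {B : Set ι}

variable (R v i B) in
/-- `B` is a substitution set for `i` with respect to the family `v` (for a code, the columns of a
generator matrix): `v i` is a linear combination of the `v j` with `j ∈ B`. The condition `i ∉ B`
is part of the notion, as the paper takes `B ⊆ {1,…,V} \ {i}`. -/
def IsSubstitutionSet : Prop :=
  i ∉ B ∧ v i ∈ Submodule.span R (v '' B)

theorem minimal_isSubstitutionSet_iff (hi : i ∉ B) :
    Minimal (IsSubstitutionSet R v i) B ↔
      v i ∈ Submodule.span R (v '' B) ∧ ∀ B' ⊂ B, v i ∉ Submodule.span R (v '' B') := by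
  rw [minimal_iff_forall_lt]
  refine and_congr (and_iff_right hi) (forall₂_congr fun B' hB' => not_congr ?_)
  exact and_iff_right fun hiB' => hi (hB'.subset hiB')

variable [Fintype ι]

theorem isSubstitutionSet_support_sdiff_singleton {c : ι → R} (hc : ∑ j, c j • v j = 0)
    (hci : c i = 1) : IsSubstitutionSet R v i (Function.support c \ {i}) := by
  classical
  refine ⟨by simp, ?_⟩
  have hvi : v i = -∑ j ∈ Finset.univ.erase i, c j • v j := by
    rw [← Finset.add_sum_erase _ _ (Finset.mem_univ i), hci, one_smul] at hc
    exact eq_neg_of_add_eq_zero_left hc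
  rw [hvi]
  refine neg_mem (sum_mem fun j hj => ?_)
  by_cases hcj : c j = 0
  · simp [hcj]
  · exact Submodule.smul_mem _ _
      (Submodule.subset_span (Set.mem_image_of_mem v ⟨hcj, Finset.ne_of_mem_erase hj⟩))

theorem IsSubstitutionSet.exists_support_sdiff_singleton_subset (hB : IsSubstitutionSet R v i B) :
    ∃ c : ι → R, (∑ j, c j • v j = 0 ∧ c i = 1) ∧ Function.support c \ {i} ⊆ B := by
  classical
  obtain ⟨hi, hspan⟩ := hB
  obtain ⟨l, hlB, hl⟩ := (Finsupp.mem_span_image_iff_linearCombination R).1 hspan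
  rw [Finsupp.mem_supported'] at hlB
  rw [Finsupp.linearCombination_apply, Finsupp.sum_fintype _ _ fun j => zero_smul R (v j)] at hl
  refine ⟨Pi.single i 1 - ⇑l, ⟨?_, by simp [hlB i hi]⟩, ?_⟩
  · simp [sub_smul, Finset.sum_sub_distrib, Pi.single_apply, hl]
  · rintro j ⟨hj, hji : j ≠ i⟩
    by_contra hjB
    exact hj (by simp [hji, hlB j hjB])

theorem minimal_isSubstitutionSet_iff_exists_minimalFor_support [Nontrivial R] (hi : i ∉ B) :
    Minimal (IsSubstitutionSet R v i) B ↔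
      ∃ c : ι → R, MinimalFor (fun c => ∑ j, c j • v j = 0 ∧ c i = 1) Function.support c ∧
        Function.support c = B ∪ {i} := by
  have mem_support {c : ι → R} (hci : c i = 1) : i ∈ Function.support c := by simp [hci]
  rw [minimal_iff_exists_minimalFor (f := fun c : ι → R => Function.support c \ {i})
    (fun c hc => isSubstitutionSet_support_sdiff_singleton hc.1 hc.2)
    (fun B hB => hB.exists_support_sdiff_singleton_subset)]
  refine exists_congr fun c => ?_
  rw [minimalFor_sdiff_iff fun c hc => Set.singleton_subset_iff.2 (mem_support hc.2)]
  refine and_congr_right fun hc => ?_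
  have hic := mem_support hc.prop.2
  change Function.support c \ {i} = B ↔ Function.support c = B ∪ {i}
  grind

end Relations

section Codes

variable {F : Type*} [Field F] {V : ℕ}

theorem isMinimalWrt_iff_minimalFor {D : Submodule F (Fin V → F)} {i : Fin V} {c : Fin V → F} :
    IsMinimalWrt D i c ↔ MinimalFor (fun x => x ∈ D ∧ x i = 1) Function.support c := by
  rw [minimalFor_iff_forall_lt, IsMinimalWrt, ← and_assoc]
  refine and_congr_right fun _ => ⟨fun h x hlt hx => ?_, ?_⟩
  · exact h ⟨x, hx.1, ne_of_apply_ne Function.support hlt.ne, hx.2, hlt⟩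
  · rintro h ⟨x, hxD, -, hxi, hlt⟩
    exact h hlt ⟨hxD, hxi⟩

theorem mem_dualCode_span_iff {S : Set (Fin V → F)} {x : Fin V → F} :
    x ∈ dualCode (Submodule.span F S) ↔ ∀ c ∈ S, x ⬝ᵥ c = 0 :=
  Submodule.span_le (p := LinearMap.ker (dotProductBilin F F x))

theorem mem_dualCode_span_range_row_iff {κ : Type*} {G : Matrix κ (Fin V) F} {x : Fin V → F} :
    x ∈ dualCode (Submodule.span F (Set.range G.row)) ↔ ∑ j, x j • G.col j = 0 := by
  simp only [mem_dualCode_span_iff, Set.forall_mem_range, dotProduct, funext_iff, Finset.sum_apply,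
    Pi.smul_apply, smul_eq_mul, row_apply, col_apply, Pi.zero_apply]

theorem stmt_16_general {κ : Type*} (C : Submodule F (Fin V → F)) (G : Matrix κ (Fin V) F)
    (hGspan : Submodule.span F (Set.range G.row) = C) (i : Fin V) (B : Set (Fin V)) (hiB : i ∉ B) :
    (G.col i ∈ Submodule.span F (G.col '' B) ∧
        ∀ B' ⊂ B, G.col i ∉ Submodule.span F (G.col '' B')) ↔
      ∃ c, IsMinimalWrt (dualCode C) i c ∧ Function.support c = B ∪ {i} := by
  subst hGspan
  simp only [isMinimalWrt_iff_minimalFor, mem_dualCode_span_range_row_iff]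
  rw [← minimal_isSubstitutionSet_iff hiB,
    minimal_isSubstitutionSet_iff_exists_minimalFor_support hiB]

end Codes

/-- For any `i`, a subset `B ⊆ {1,…,V}\{i}` is a minimal substitution
set for `i` (a substitution set none of whose proper subsets is a substitution set,
where `B` is a substitution set iff `g_i` lies in the `𝔽_q`-span of
`{g_j : j ∈ B}`) iff there exists a codeword `c ∈ C^⊥` minimal with respect to `i`
whose support equals `B ∪ {i}`. -/
theorem stmt_16 {F : Type*} [Field F] [Fintype F] [DecidableEq F] {V k : ℕ}
    (C : Submodule F (Fin V → F)) (hCk : Module.finrank F C = k)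
    (hdC : ∀ c ∈ C, c ≠ 0 → 2 ≤ hammingNorm c)
    (hdD : ∀ c ∈ dualCode C, c ≠ 0 → 2 ≤ hammingNorm c)
    (G : Matrix (Fin k) (Fin V) F)
    (hGspan : Submodule.span F (Set.range fun i : Fin k => G i) = C)
    (hGli : LinearIndependent F (fun i : Fin k => G i))
    (i : Fin V) (B : Set (Fin V)) (hiB : i ∉ B) :
    ((fun s => G s i) ∈ Submodule.span F ((fun j => fun s => G s j) '' B) ∧
        ∀ B' ⊂ B, (fun s => G s i) ∉
          Submodule.span F ((fun j => fun s => G s j) '' B')) ↔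
      ∃ c, IsMinimalWrt (dualCode C) i c ∧ Function.support c = B ∪ {i} :=
  stmt_16_general C G hGspan i B hiB
end
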